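/- Let V be a variety with a weak f-term, A ∈ V, and let θ,θ₁,…,θₙ be congruences of A with f(θ) ≤ [θ₁,…,θₙ] ≤ θ₁∨⋯∨θₙ ≤ θ. Then: (1) for any congruence γ of A, the centralizer relation C(θ₁,…,θₙ;γ) holds if and only if [θ₁,…,θₙ] ≤ γ; (2) if η ≤ θ₁∧⋯∧θₙ, then in the quotient algebra A/η one has [θ₁/η,…,θₙ/η] = ([θ₁,…,θₙ] ∨ η)/η. -/

import Mathlib

set_option autoImplicit false

namespace UA

/-- A signature: a type of operation symbols, each with a finite arity. -/
structure Signature : Type 1 where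
  ops : Type
  arity : ops → ℕ

/-- An algebra for a signature: a carrier set together with an interpretation
of every operation symbol. -/
structure Algebra (σ : Signature) : Type 1 where
  carrier : Type
  interp : (o : σ.ops) → (Fin (σ.arity o) → carrier) → carrier

variable {σ : Signature}

/-- A congruence of an algebra: an equivalence relation compatible with all
basic operations. -/
structure Con (A : Algebra σ) : Type where
  r : A.carrier → A.carrier → Prop
  refl : ∀ a, r a a
  symm : ∀ {a b}, r a b → r b a
  trans : ∀ {a b c}, r a b → r b c → r a c
  compat : ∀ (o : σ.ops) (x y : Fin (σ.arity o) → A.carrier),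
      (∀ i, r (x i) (y i)) → r (A.interp o x) (A.interp o y)

namespace Con

variable {A : Algebra σ}

instance : LE (Con A) := ⟨fun c d => ∀ a b : A.carrier, c.r a b → d.r a b⟩
instance : LT (Con A) := ⟨fun c d => c ≤ d ∧ ¬ d ≤ c⟩

/-- The total congruence `1_A`. -/
def top : Con A where
  r := fun _ _ => True
  refl := fun _ => trivial
  symm := fun _ => trivial
  trans := fun _ _ => trivial
  compat := fun _ _ _ _ => trivial

/-- The identity congruence `0_A`. -/
def bot : Con A where
  r := fun a b => a = b
  refl := fun _ => rfl
  symm := fun h => h.symm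
  trans := fun h h' => h.trans h'
  compat := fun o _ _ h => congrArg (A.interp o) (funext h)

/-- Meet of an arbitrary family of congruences (intersection). -/
def sInf (S : Set (Con A)) : Con A where
  r a b := ∀ c ∈ S, c.r a b
  refl a c _ := c.refl a
  symm h c hc := c.symm (h c hc)
  trans h h' c hc := c.trans (h c hc) (h' c hc)
  compat o x y h c hc := c.compat o x y (fun i => h i c hc)

/-- Binary meet of congruences. -/
def inf (c d : Con A) : Con A where
  r a b := c.r a b ∧ d.r a b
  refl a := ⟨c.refl a, d.refl a⟩
  symm h := ⟨c.symm h.1, d.symm h.2⟩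
  trans h h' := ⟨c.trans h.1 h'.1, d.trans h.2 h'.2⟩
  compat o x y h := ⟨c.compat o x y fun i => (h i).1, d.compat o x y fun i => (h i).2⟩

/-- The congruence generated by a set of pairs. -/
def conGen (S : Set (A.carrier × A.carrier)) : Con A :=
  sInf {c : Con A | ∀ p ∈ S, c.r p.1 p.2}

/-- Binary join of congruences. -/
def sup (c d : Con A) : Con A := conGen {p | c.r p.1 p.2 ∨ d.r p.1 p.2}

/-- Join of a family of congruences. -/
def iSup {I : Type} (f : I → Con A) : Con A := conGen {p | ∃ i, (f i).r p.1 p.2}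

/-- Composition of congruences as binary relations. -/
def comp (c d : Con A) (a b : A.carrier) : Prop := ∃ x, c.r a x ∧ d.r x b

/-- `d` covers `c` in the congruence lattice. -/
def Covers (c d : Con A) : Prop := c < d ∧ ∀ e : Con A, c < e → e ≤ d → e = d

theorem le_sup_right {c d : Con A} : d ≤ sup c d :=
  fun a b h e he => he (a, b) (Or.inr h)

def toSetoid (c : Con A) : Setoid A.carrier := ⟨c.r, ⟨c.refl, c.symm, c.trans⟩⟩

end Con

/-- The quotient algebra `A/γ`. -/
noncomputable def quotAlg (A : Algebra σ) (γ : Con A) : Algebra σ where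
  carrier := Quotient γ.toSetoid
  interp o x := Quotient.mk γ.toSetoid (A.interp o (fun i => (x i).out))

/-- The quotient congruence `α/γ` for `γ ≤ α`. -/
noncomputable def Con.quot {A : Algebra σ} (α γ : Con A) (h : γ ≤ α) : Con (quotAlg A γ) where
  r x y := Quotient.liftOn₂ x y (fun a b => α.r a b)
    (fun a b a' b' ha hb => propext
      ⟨fun hr => α.trans (α.symm (h _ _ ha)) (α.trans hr (h _ _ hb)),
       fun hr => α.trans (h _ _ ha) (α.trans hr (α.symm (h _ _ hb)))⟩)
  refl x := Quotient.inductionOn x fun a => α.refl a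
  symm {x y} h' := Quotient.inductionOn₂ x y (fun _ _ hab => α.symm hab) h'
  trans {x y z} h1 h2 :=
    Quotient.inductionOn₃ x y z (fun _ _ _ hab hbc => α.trans hab hbc) h1 h2
  compat o x y hxy := by
    show α.r (A.interp o fun i => (x i).out) (A.interp o fun i => (y i).out)
    refine α.compat o _ _ fun i => ?_
    have h1 := hxy i
    rw [← Quotient.out_eq (x i), ← Quotient.out_eq (y i)] at h1
    exact h1

/-- The polynomial operations of an algebra: the clone generated by the basic
operations, the projections and the constants. -/
inductive IsPolynomial (A : Algebra σ) : {n : ℕ} → ((Fin n → A.carrier) → A.carrier) → Prop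
  | proj {n : ℕ} (i : Fin n) : IsPolynomial A (fun x => x i)
  | const {n : ℕ} (a : A.carrier) : IsPolynomial A (fun _ : Fin n → A.carrier => a)
  | app {n : ℕ} (o : σ.ops) (g : Fin (σ.arity o) → (Fin n → A.carrier) → A.carrier) :
      (∀ j, IsPolynomial A (g j)) → IsPolynomial A (fun x => A.interp o (fun j => g j x))

/-- Substituting, coordinatewise according to the grouping `g` and the choice
vector `ε`, the entries of `b` (where `ε` is `true`) or of `a` (where `ε` is `false`). -/
def chooseVec {β : Type} {N n : ℕ} (g : Fin N → Fin n) (a b : Fin N → β)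
    (ε : Fin n → Bool) : Fin N → β :=
  fun i => if ε (g i) then b i else a i

/-- The higher centralizer relation `C(α₁,…,αₙ,β;δ)` of Bulatov.  Polynomials with
grouped variables are modelled by a polynomial `p` of arity `N` together with a
grouping map `g : Fin N → Fin (n+1)`; the group `Fin.last n` is the `β`-group. -/
def Centralizes {A : Algebra σ} {n : ℕ} (α : Fin n → Con A) (β δ : Con A) : Prop :=
  ∀ (N : ℕ) (p : (Fin N → A.carrier) → A.carrier), IsPolynomial A p →
    ∀ (g : Fin N → Fin (n + 1)) (a b : Fin N → A.carrier),
      (∀ i, (Fin.lastCases (motive := fun _ => Con A) β α (g i)).r (a i) (b i)) →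
      (∀ ε : Fin n → Bool, ε ≠ (fun _ => true) →
        δ.r (p (chooseVec g a b (Fin.lastCases (motive := fun _ => Bool) false ε)))
            (p (chooseVec g a b (Fin.lastCases (motive := fun _ => Bool) true ε)))) →
      δ.r (p (chooseVec g a b (Fin.lastCases (motive := fun _ => Bool) false fun _ => true)))
          (p (chooseVec g a b (Fin.lastCases (motive := fun _ => Bool) true fun _ => true)))

/-- The higher commutator `[α₁,…,αₙ,β]`: the smallest congruence `δ` such that
`C(α₁,…,αₙ,β;δ)` holds. -/
def commutator {A : Algebra σ} {n : ℕ} (α : Fin n → Con A) (β : Con A) : Con A :=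
  Con.sInf {δ : Con A | Centralizes α β δ}

/-- The higher commutator of a nonempty list of congruences, with the convention
`[α] = α` for a single congruence. -/
def commList {A : Algebra σ} : {n : ℕ} → (Fin (n + 1) → Con A) → Con A
  | 0, γ => γ 0
  | (n+1), γ => commutator (fun j : Fin (n+1) => γ j.castSucc) (γ (Fin.last (n+1)))

/-- The `m`-fold commutator `[θ,…,θ]_m` (for `m ≥ 1`). -/
def nfold {A : Algebra σ} (θ : Con A) (m : ℕ) : Con A :=
  commList (fun _ : Fin (m - 1 + 1) => θ)

/-- The binary commutator `[c,d]`. -/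
def binComm {A : Algebra σ} (c d : Con A) : Con A := commutator (fun _ : Fin 1 => c) d

/-- The lower central series `(θ]ⁿ`. -/
def lcs {A : Algebra σ} (θ : Con A) : ℕ → Con A
  | 0 => θ
  | (k+1) => binComm θ (lcs θ k)

/-- The derived series `[θ]ⁿ`. -/
def derived {A : Algebra σ} (θ : Con A) : ℕ → Con A
  | 0 => θ
  | (k+1) => binComm (derived θ k) (derived θ k)

/-- An algebra is nilpotent if some term of the lower central series of `1_A` is `0_A`. -/
def Nilpotent (A : Algebra σ) : Prop := ∃ m, lcs (Con.top : Con A) m = Con.bot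

/-- An algebra is nilpotent of class `n` if `(1_A]ⁿ = 0_A`. -/
def NilpotentOfClass (A : Algebra σ) (n : ℕ) : Prop := lcs (Con.top : Con A) n = Con.bot

/-- A congruence is solvable if some term of its derived series is `0_A`. -/
def SolvableCon {A : Algebra σ} (θ : Con A) : Prop := ∃ m, derived θ m = Con.bot

/-- `A` is `n`-supernilpotent if `[1_A,…,1_A]_n = 0_A`. -/
def Supernilpotent (A : Algebra σ) (n : ℕ) : Prop := nfold (Con.top : Con A) n = Con.bot

/-- A polynomial `f` absorbs the tuple `a` to the element `c`. -/
def Absorbs (A : Algebra σ) {k : ℕ} (f : (Fin k → A.carrier) → A.carrier)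
    (a : Fin k → A.carrier) (c : A.carrier) : Prop :=
  ∀ b : Fin k → A.carrier, (∃ i, b i = a i) → f b = c

/-- Terms over a signature with variables in `X`. -/
inductive Term (σ : Signature) (X : Type) : Type
  | var : X → Term σ X
  | app : (o : σ.ops) → (Fin (σ.arity o) → Term σ X) → Term σ X

/-- Evaluation of a term in an algebra under an assignment of the variables. -/
def Term.eval {X : Type} (A : Algebra σ) (v : X → A.carrier) : Term σ X → A.carrier
  | Term.var x => v x
  | Term.app o t => A.interp o fun i => Term.eval A v (t i)

/-- Substitution of terms into a term. -/
def Term.subst {X Y : Type} : Term σ X → (X → Term σ Y) → Term σ Y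
  | Term.var x, s => s x
  | Term.app o t, s => Term.app o fun i => Term.subst (t i) s

/-- `A` possesses a Mal'cev term. -/
def HasMalcevTerm (A : Algebra σ) : Prop :=
  ∃ t : Term σ (Fin 3), ∀ a b : A.carrier,
    t.eval A ![a, b, b] = a ∧ t.eval A ![b, b, a] = a

/-- A class of algebras is a variety when it is the class of all models of a set
of identities. -/
def IsVariety (V : Algebra σ → Prop) : Prop :=
  ∃ E : Set (Term σ ℕ × Term σ ℕ),
    ∀ A : Algebra σ, V A ↔ ∀ e ∈ E, ∀ v : ℕ → A.carrier, e.1.eval A v = e.2.eval A v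

/-- Two terms are `V`-equivalent when they evaluate equally in every member of `V`. -/
def vSetoid (V : Algebra σ → Prop) (X : Type) : Setoid (Term σ X) where
  r t s := ∀ A : Algebra σ, V A → ∀ v : X → A.carrier, t.eval A v = s.eval A v
  iseqv := ⟨fun _ _ _ _ => rfl, fun h A hA v => (h A hA v).symm,
    fun h h' A hA v => (h A hA v).trans (h' A hA v)⟩

/-- The `V`-free algebra on the set `X` of generators. -/
noncomputable def freeAlg (V : Algebra σ → Prop) (X : Type) : Algebra σ where
  carrier := Quotient (vSetoid V X)
  interp o x := Quotient.mk (vSetoid V X) (Term.app o fun i => (x i).out)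

/-- The principal congruence `θ(a,b)` generated by the pair `(a,b)`. -/
def conPair (A : Algebra σ) (a b : A.carrier) : Con A := Con.conGen {(a, b)}

/-- A weak difference term for the class `V`. -/
def IsWeakDiffTerm (V : Algebra σ → Prop) (c : Term σ (Fin 3)) : Prop :=
  ∀ A : Algebra σ, V A → ∀ a b : A.carrier,
    (binComm (conPair A a b) (conPair A a b)).r (c.eval A ![a, b, b]) a ∧
    (binComm (conPair A a b) (conPair A a b)).r a (c.eval A ![b, b, a])

/-- A weak `n`-difference term for the class `V`. -/
def IsWeakNDiffTerm (V : Algebra σ → Prop) (n : ℕ) (c : Term σ (Fin 3)) : Prop :=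
  ∀ A : Algebra σ, V A → ∀ a b : A.carrier,
    (nfold (conPair A a b) n).r (c.eval A ![a, b, b]) a ∧
    (nfold (conPair A a b) n).r a (c.eval A ![b, b, a])

/-- Order-preserving maps on the congruence lattice. -/
def MonotoneCon {A : Algebra σ} (F : Con A → Con A) : Prop :=
  ∀ c d : Con A, c ≤ d → F c ≤ F d

/-- `p` is a weak `f`-term of `A` with respect to the interpretation `F`. -/
def IsWeakFTerm (A : Algebra σ) (F : Con A → Con A) (p : Term σ (Fin 3)) : Prop :=
  ∀ (θ : Con A) (a b : A.carrier), θ.r a b →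
    (F θ).r (p.eval A ![a, b, b]) a ∧ (F θ).r a (p.eval A ![b, b, a])

/-- `p` is a weak `f`-term for the class `V`. -/
def HasWeakFTermVariety (V : Algebra σ → Prop) (p : Term σ (Fin 3)) : Prop :=
  ∀ A : Algebra σ, V A → ∃ F : Con A → Con A, MonotoneCon F ∧ IsWeakFTerm A F p

/-- The set `T^θ_{n,f}(θ₁,…,θₙ)` of pairs coming from polynomials which
`f(θ)`-absorb on the cube `{ā₁,b̄₁}×⋯×{āₙ,b̄ₙ}`. -/
def TSet (A : Algebra σ) (F : Con A → Con A) (θ : Con A) {n : ℕ} (θs : Fin n → Con A) :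
    Set (A.carrier × A.carrier) :=
  {pr | ∃ (N : ℕ) (g : (Fin N → A.carrier) → A.carrier), IsPolynomial A g ∧
    ∃ (gr : Fin N → Fin n) (a b : Fin N → A.carrier),
      (∀ i, (θs (gr i)).r (a i) (b i)) ∧
      (∀ ε : Fin n → Bool, (∃ j, ε j = false) →
        (F θ).r (g (fun i => if ε (gr i) then b i else a i)) (g a)) ∧
      pr = (g b, g a)}

/-- Homomorphisms of algebras. -/
def IsHom (A B : Algebra σ) (h : A.carrier → B.carrier) : Prop :=
  ∀ (o : σ.ops) (x : Fin (σ.arity o) → A.carrier),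
    h (A.interp o x) = B.interp o (fun i => h (x i))

/-- The product of a family of algebras. -/
def prodAlg {I : Type} (As : I → Algebra σ) : Algebra σ where
  carrier := ∀ i, (As i).carrier
  interp o x i := (As i).interp o (fun j => x j i)

/-- The subuniverse generated by a subset. -/
inductive Gen (A : Algebra σ) (S : Set A.carrier) : A.carrier → Prop
  | base {a : A.carrier} : a ∈ S → Gen A S a
  | app (o : σ.ops) (x : Fin (σ.arity o) → A.carrier) :
      (∀ i, Gen A S (x i)) → Gen A S (A.interp o x)

/-- `A` possesses a Taylor term. -/
def HasTaylorTerm (A : Algebra σ) : Prop :=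
  ∃ (n : ℕ) (t : Term σ (Fin n)), 1 ≤ n ∧
    (∀ a : A.carrier, t.eval A (fun _ => a) = a) ∧
    ∀ i : Fin n, ∃ u v : Fin n → Bool, u i = true ∧ v i = false ∧
      ∀ x y : A.carrier,
        t.eval A (fun j => if u j then x else y) = t.eval A (fun j => if v j then x else y)

/-- The variety `V` possesses a Taylor term. -/
def VarietyHasTaylorTerm (V : Algebra σ → Prop) : Prop :=
  ∃ (n : ℕ) (t : Term σ (Fin n)), 1 ≤ n ∧
    (∀ A : Algebra σ, V A → ∀ a : A.carrier, t.eval A (fun _ => a) = a) ∧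
    ∀ i : Fin n, ∃ u v : Fin n → Bool, u i = true ∧ v i = false ∧
      ∀ A : Algebra σ, V A → ∀ x y : A.carrier,
        t.eval A (fun j => if u j then x else y) = t.eval A (fun j => if v j then x else y)

/-- `Ξ(θ)`: the smallest set of congruences containing `θ` and closed under
higher commutators (of arity at least 2) of its members. -/
inductive Xi {A : Algebra σ} (θ : Con A) : Con A → Prop
  | base : Xi θ θ
  | comm {k : ℕ} (γ : Fin (k + 2) → Con A) : (∀ j, Xi θ (γ j)) → Xi θ (commList γ)

/-- An expanded loop on the carrier `α` with extra operations indexed by `ι`. -/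
structure ExpLoop (ι : Type) (ar : ι → ℕ) (α : Type) : Type where
  mul : α → α → α
  ldiv : α → α → α
  rdiv : α → α → α
  zero : α
  extra : (i : ι) → (Fin (ar i) → α) → α
  ldiv_mul : ∀ x y, ldiv x (mul x y) = y
  mul_rdiv : ∀ x y, rdiv (mul x y) y = x
  mul_ldiv : ∀ x y, mul x (ldiv x y) = y
  rdiv_mul : ∀ x y, mul (rdiv x y) y = x
  zero_mul : ∀ x, mul zero x = x
  mul_zero : ∀ x, mul x zero = x

/-- Operation symbols of an expanded loop. -/
inductive LoopOp (ι : Type) : Type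
  | mul | ldiv | rdiv | zero
  | extra : ι → LoopOp ι

/-- The signature of an expanded loop. -/
@[reducible] def loopSig (ι : Type) (ar : ι → ℕ) : Signature where
  ops := LoopOp ι
  arity o := match o with
    | .mul => 2
    | .ldiv => 2
    | .rdiv => 2
    | .zero => 0
    | .extra i => ar i

/-- The algebra underlying an expanded loop. -/
def ExpLoop.toAlgebra {ι : Type} {ar : ι → ℕ} {α : Type} (L : ExpLoop ι ar α) :
    Algebra (loopSig ι ar) where
  carrier := α
  interp o := match o with
    | .mul => fun x => L.mul (x 0) (x 1)
    | .ldiv => fun x => L.ldiv (x 0) (x 1)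
    | .rdiv => fun x => L.rdiv (x 0) (x 1)
    | .zero => fun _ => L.zero
    | .extra i => L.extra i

/-- An expanded loop is of `n`-type. -/
def ExpLoop.IsNType {ι : Type} {ar : ι → ℕ} {α : Type} (L : ExpLoop ι ar α) (n : ℕ) : Prop :=
  (∀ p : Σ k : ℕ, (Fin k → α) → α,
      (∃ i : ι, p = ⟨ar i, L.extra i⟩) ↔
        (1 ≤ p.1 ∧ p.1 ≤ n - 1 ∧ IsPolynomial L.toAlgebra p.2 ∧
          Absorbs L.toAlgebra p.2 (fun _ => L.zero) L.zero)) ∧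
  (∀ f : (Fin (n - 1) → α) → α,
      IsPolynomial L.toAlgebra f → Absorbs L.toAlgebra f (fun _ => L.zero) L.zero →
      ∀ (j : Fin (n - 1)) (x : Fin (n - 1) → α) (u v : α),
        f (Function.update x j (L.mul u v)) =
          L.mul (f (Function.update x j u)) (f (Function.update x j v))) ∧
  (∀ k : ℕ, 2 ≤ k → k < n →
      commList (Fin.snoc (fun _ : Fin (n - k) => (Con.top : Con L.toAlgebra))
        (nfold Con.top k)) = Con.bot)

/-- `A` is polynomially equivalent to an `n`-type expanded loop on the same carrier. -/
def PolyEquivNTypeLoop (A : Algebra σ) (n : ℕ) : Prop :=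
  ∃ (ι : Type) (ar : ι → ℕ) (L : ExpLoop ι ar A.carrier),
    L.IsNType n ∧
    ∀ (k : ℕ) (f : (Fin k → A.carrier) → A.carrier),
      IsPolynomial A f ↔ IsPolynomial L.toAlgebra f

/-- Left-associated product of a list with initial value `c`. -/
def lprodFrom {β : Type} (mul : β → β → β) (c : β) (l : List β) : β := List.foldl mul c l

/-- Left-associated product of a list (with a default value for the empty list). -/
def lprodList {β : Type} (mul : β → β → β) (dflt : β) : List β → β
  | [] => dflt
  | a :: l => List.foldl mul a l

/-- Left-associated product of a nonempty tuple. -/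
def lassoc {β : Type} (mul : β → β → β) : {m : ℕ} → (Fin (m + 1) → β) → β
  | 0, y => y 0
  | (m+1), y => mul (lassoc mul (Fin.init y)) (y (Fin.last (m+1)))

/-- `A` has a representation of degree `n`. -/
def HasRepOfDegree (A : Algebra σ) (n : ℕ) : Prop :=
  ∃ (z : A.carrier) (r : (Fin 2 → A.carrier) → A.carrier),
    IsPolynomial A r ∧ (∀ x : A.carrier, r ![z, x] = x) ∧ (∀ x : A.carrier, r ![x, z] = x) ∧
    ∀ (k : ℕ) (f : (Fin k → A.carrier) → A.carrier), IsPolynomial A f →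
      ∃ (c : A.carrier) (R : ℕ → (Fin k → A.carrier) → A.carrier),
        (∀ m : ℕ, 1 ≤ m → m ≤ min k n →
          ∃ (l : List (Finset (Fin k)))
            (t : (S : Finset (Fin k)) → (Fin S.card → A.carrier) → A.carrier),
            l.Nodup ∧
            (∀ S : Finset (Fin k), S ∈ l ↔ S.card = m) ∧
            (∀ S ∈ l, IsPolynomial A (t S) ∧ Absorbs A (t S) (fun _ => z) z) ∧
            (∀ x : Fin k → A.carrier,
              R m x = lprodList (fun u v => r ![u, v]) z
                (l.map (fun S => t S (fun j => x ((S.orderIsoOfFin rfl j).val)))))) ∧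
        ∀ x : Fin k → A.carrier,
          f x = lprodFrom (fun u v => r ![u, v]) c
            ((List.range' 1 (min k n)).map (fun m => R m x))

/-- Products of `0`-absorbing polynomials (of arities between `lo` and `hi`)
in a given set of variables. -/
inductive ProdOfAbs {ι : Type} {ar : ι → ℕ} {α : Type} (L : ExpLoop ι ar α)
    (lo hi : ℕ) {I : Type} : ((I → α) → α) → Prop
  | base {p : ℕ} (h : (Fin p → α) → α) (sel : Fin p → I) :
      lo ≤ p → p ≤ hi → IsPolynomial L.toAlgebra h →
      Absorbs L.toAlgebra h (fun _ => L.zero) L.zero →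
      ProdOfAbs L lo hi (fun v => h (fun j => v (sel j)))
  | mul {F G : (I → α) → α} :
      ProdOfAbs L lo hi F → ProdOfAbs L lo hi G →
      ProdOfAbs L lo hi (fun v => L.mul (F v) (G v))

/-- The terms `q_m` (for `m ≥ 2`, `qSeq q (m-2)` is `q_m`):
`q₂ := q`, `q_{m+1}(x,y,z) := q(x, q_m(x,y,y), q_m(x,y,z))`. -/
def qSeq (q : Term σ (Fin 3)) : ℕ → Term σ (Fin 3)
  | 0 => q
  | (k+1) => q.subst ![Term.var 0, (qSeq q k).subst ![Term.var 0, Term.var 1, Term.var 1], qSeq q k]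

/-! The entries of a `θ₁,…,θₙ`-matrix are indexed by the vertices of a cube, and the centralizer
relation compares the two entries on an edge. Given a matrix `M` and an element `e`, a polynomial
`d` that is Mal'cev modulo `φ = f(θ)` on `θ` yields for each direction `i` the matrix with entries
`d(M(E), M(E with Eᵢ reset), e)`. It is `φ`-close to `e` wherever `Eᵢ` is not set, and it keeps
the top entry up to any congruence `γ ≥ φ` that identifies the entry below the top one with `e`.
Doing this in every direction, first in the last one and with `e` the entry that the centralizer
relation compares with the top one, replaces a test matrix for `C(θ₁,…,θₙ;γ)` by one whose non-top
entries agree modulo `φ`. This is a test matrix for the commutator `δ` when `φ ≤ δ`, and so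
`C(θ₁,…,θₙ;δ)` passes up to every `γ ≥ δ`. The statement on quotients follows because matrices of
`A/η` are precisely the images of matrices of `A`. -/

namespace Con

variable {A : Algebra σ}

@[ext]
theorem ext {c d : Con A} (h : ∀ a b, c.r a b ↔ d.r a b) : c = d := by
  cases c
  cases d
  congr
  exact funext₂ fun a b => propext (h a b)

instance : PartialOrder (Con A) where
  toLE := inferInstance
  toLT := inferInstance
  le_refl _ _ _ h := h
  le_trans _ _ _ h h' a b hab := h' a b (h a b hab)
  le_antisymm _ _ h h' := Con.ext fun a b => ⟨h a b, h' a b⟩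

theorem conGen_le {S : Set (A.carrier × A.carrier)} {c : Con A} (h : ∀ p ∈ S, c.r p.1 p.2) :
    conGen S ≤ c :=
  fun _ _ hab => hab c h

theorem sup_le {c d e : Con A} (hc : c ≤ e) (hd : d ≤ e) : sup c d ≤ e :=
  conGen_le fun p hp => hp.elim (hc p.1 p.2) (hd p.1 p.2)

theorem le_sup_left {c d : Con A} : c ≤ sup c d :=
  fun a b h _ he => he (a, b) (Or.inl h)

theorem le_iSup {I : Type} (f : I → Con A) (i : I) : f i ≤ iSup f :=
  fun a b h _ hc => hc (a, b) ⟨i, h⟩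

/-- The preimage of a congruence under a homomorphism. -/
def comap {B : Algebra σ} {f : A.carrier → B.carrier} (hf : IsHom A B f) (δ : Con B) : Con A where
  r a b := δ.r (f a) (f b)
  refl _ := δ.refl _
  symm h := δ.symm h
  trans h h' := δ.trans h h'
  compat o x y h := by
    rw [hf, hf]
    exact δ.compat o _ _ h

end Con

namespace IsPolynomial

variable {A : Algebra σ} {N : ℕ} {p : (Fin N → A.carrier) → A.carrier}

theorem reindex (hp : IsPolynomial A p) {M : ℕ} (s : Fin N → Fin M) :
    IsPolynomial A fun x => p fun k => x (s k) := by
  induction hp with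
  | proj i => exact proj (s i)
  | const c => exact const c
  | app o f _ ih => exact app o (fun j x => f j fun k => x (s k)) ih

theorem rel (hp : IsPolynomial A p) (c : Con A) {x y : Fin N → A.carrier}
    (h : ∀ k, c.r (x k) (y k)) : c.r (p x) (p y) := by
  induction hp with
  | proj i => exact h i
  | const a => exact c.refl a
  | app o _ _ ih => exact c.compat o _ _ ih

end IsPolynomial

theorem Term.isPolynomial_eval (A : Algebra σ) {N : ℕ} (t : Term σ (Fin N)) :
    IsPolynomial A fun v => t.eval A v := by
  induction t with
  | var i => exact .proj i
  | app o t ih => exact .app o (fun j v => (t j).eval A v) ih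

/-- The `2 × ⋯ × 2` matrices `M(θ₁,…,θₙ)` of the term condition, as functions on the vertices of
the cube: the subalgebra of `A ^ (2 ^ n)` generated by the constants and by the matrices that take
two `θᵢ`-related values on the two faces in direction `i`. -/
inductive IsMatrix {A : Algebra σ} {n : ℕ} (θs : Fin n → Con A) :
    ((Fin n → Bool) → A.carrier) → Prop
  | const (a : A.carrier) : IsMatrix θs fun _ => a
  | face (i : Fin n) {a b : A.carrier} (h : (θs i).r a b) :
      IsMatrix θs fun E => if E i then b else a
  | app (o : σ.ops) (M : Fin (σ.arity o) → (Fin n → Bool) → A.carrier) :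
      (∀ j, IsMatrix θs (M j)) → IsMatrix θs fun E => A.interp o fun j => M j E

namespace IsMatrix

variable {A B : Algebra σ} {n : ℕ} {θs : Fin n → Con A} {M : (Fin n → Bool) → A.carrier}

theorem polynomial {N : ℕ} {p : (Fin N → A.carrier) → A.carrier} (hp : IsPolynomial A p)
    {M : Fin N → (Fin n → Bool) → A.carrier} (hM : ∀ k, IsMatrix θs (M k)) :
    IsMatrix θs fun E => p fun k => M k E := by
  induction hp with
  | proj i => exact hM i
  | const a => exact const a
  | app o f _ ih => exact app o (fun j E => f j fun k => M k E) ih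

theorem exists_polynomial (hM : IsMatrix θs M) :
    ∃ (N : ℕ) (p : (Fin N → A.carrier) → A.carrier) (g : Fin N → Fin n) (a b : Fin N → A.carrier),
      IsPolynomial A p ∧ (∀ k, (θs (g k)).r (a k) (b k)) ∧ M = fun E => p (chooseVec g a b E) := by
  induction hM with
  | const c => exact ⟨0, fun _ => c, Fin.elim0, Fin.elim0, Fin.elim0, .const c, nofun, rfl⟩
  | @face i a b h =>
    exact ⟨1, fun x => x 0, fun _ => i, fun _ => a, fun _ => b, .proj 0, fun _ => h, rfl⟩
  | app o M _ ih =>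
    choose N p g a b hp hab hM using ih
    let s : (Σ j, Fin (N j)) ≃ Fin (∑ j, N j) := finSigmaFinEquiv
    refine ⟨∑ j, N j, fun x => A.interp o fun j => p j fun k => x (s ⟨j, k⟩),
      fun k => g (s.symm k).1 (s.symm k).2, fun k => a (s.symm k).1 (s.symm k).2,
      fun k => b (s.symm k).1 (s.symm k).2,
      .app o _ fun j => (hp j).reindex fun k => s ⟨j, k⟩, fun k => hab _ _, ?_⟩
    simp only [hM]
    funext E
    congr! 3 with j
    funext k
    exact congrArg (fun q : Σ j, Fin (N j) => chooseVec (g q.1) (a q.1) (b q.1) E q.2)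
      (s.symm_apply_apply ⟨j, k⟩).symm

theorem update_false (hM : IsMatrix θs M) (i : Fin n) :
    IsMatrix θs fun E => M (Function.update E i false) := by
  induction hM with
  | const a => exact const a
  | @face j a b h =>
    obtain rfl | hji := eq_or_ne j i
    · simpa using const a
    · simpa [hji] using face j h
  | app o M _ ih => exact app o (fun j E => M j (Function.update E i false)) ih

theorem rel (hM : IsMatrix θs M) {θ : Con A} (hθ : ∀ i, θs i ≤ θ) (E E' : Fin n → Bool) :
    θ.r (M E) (M E') := by
  induction hM with
  | const a => exact θ.refl a
  | @face i a b h =>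
    have hab : θ.r a b := hθ i a b h
    dsimp only
    split_ifs
    exacts [θ.refl b, θ.symm hab, hab, θ.refl a]
  | app o M _ ih => exact θ.compat o _ _ ih

theorem rel_update (hM : IsMatrix θs M) (i : Fin n) (E : Fin n → Bool) :
    (θs i).r (M (Function.update E i false)) (M E) := by
  induction hM with
  | const a => exact (θs i).refl a
  | @face j a b h =>
    obtain rfl | hji := eq_or_ne j i
    · cases hE : E j
      · simpa [hE] using (θs j).refl a
      · simpa [hE] using h
    · simpa [hji] using (θs i).refl _
  | app o M _ ih => exact (θs i).compat o _ _ ih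

theorem map {f : A.carrier → B.carrier} (hf : IsHom A B f) {ψs : Fin n → Con B}
    (hM : IsMatrix (fun i => (ψs i).comap hf) M) : IsMatrix ψs fun E => f (M E) := by
  induction hM with
  | const a => exact const (f a)
  | face i h => simpa only [apply_ite f] using face (θs := ψs) i h
  | app o M _ ih => simpa only [hf o] using app o (fun j E => f (M j E)) ih

theorem exists_lift {f : A.carrier → B.carrier} (hf : IsHom A B f) (hsurj : Function.Surjective f)
    {ψs : Fin n → Con B} {M : (Fin n → Bool) → B.carrier} (hM : IsMatrix ψs M) :
    ∃ L, IsMatrix (fun i => (ψs i).comap hf) L ∧ M = fun E => f (L E) := by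
  induction hM with
  | const b =>
    obtain ⟨a, rfl⟩ := hsurj b
    exact ⟨_, const a, rfl⟩
  | @face i b b' h =>
    obtain ⟨a, rfl⟩ := hsurj b
    obtain ⟨a', rfl⟩ := hsurj b'
    exact ⟨_, face (θs := fun i => (ψs i).comap hf) i h, by simp only [apply_ite f]⟩
  | app o M _ ih =>
    choose L hL hML using ih
    exact ⟨_, app o L hL, by simp only [hML, hf o]⟩

end IsMatrix

/-- The term condition on matrices, for the edges in direction `i`; for the last direction it is
the centralizer relation (`centralizes_iff_centralizesAt`). In the hypothesis `E` also runs over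
vertices with `E i = false`, where it holds trivially. -/
def CentralizesAt {A : Algebra σ} {n : ℕ} (θs : Fin n → Con A) (i : Fin n) (δ : Con A) : Prop :=
  ∀ M, IsMatrix θs M →
    (∀ E, (∃ j ≠ i, E j = false) → δ.r (M (Function.update E i false)) (M E)) →
    δ.r (M (Function.update ⊤ i false)) (M ⊤)

theorem lastCases_castSucc_self {β : Type} {n : ℕ} (f : Fin (n + 1) → β) :
    Fin.lastCases (motive := fun _ => β) (f (Fin.last n)) (fun j => f j.castSucc) = f := by
  funext k
  cases k using Fin.lastCases <;> simp

theorem update_lastCases_last {β : Type} {n : ℕ} (x y : β) (f : Fin n → β) :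
    Function.update (Fin.lastCases (motive := fun _ => β) x f) (Fin.last n) y =
      Fin.lastCases (motive := fun _ => β) y f := by
  funext k
  cases k using Fin.lastCases <;> simp [Fin.castSucc_ne_last]

theorem centralizes_iff_centralizesAt {A : Algebra σ} {m : ℕ} (θs : Fin (m + 1) → Con A)
    (δ : Con A) :
    Centralizes (fun j => θs j.castSucc) (θs (Fin.last m)) δ ↔
      CentralizesAt θs (Fin.last m) δ := by
  have top_eq : (⊤ : Fin (m + 1) → Bool) =
      Fin.lastCases (motive := fun _ => Bool) true fun _ => true :=
    (lastCases_castSucc_self ⊤).symm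
  simp only [CentralizesAt, top_eq, update_lastCases_last]
  constructor
  · intro H M hM hδ
    obtain ⟨N, p, g, a, b, hp, hab, rfl⟩ := hM.exists_polynomial
    refine H N p hp g a b (by simpa only [lastCases_castSucc_self] using hab) fun ε hε => ?_
    obtain ⟨j, hj⟩ := Function.ne_iff.1 hε
    simpa only [update_lastCases_last] using
      hδ (Fin.lastCases true ε) ⟨j.castSucc, Fin.castSucc_ne_last j, by simpa using hj⟩
  · intro H N p hp g a b hab hδ
    simp only [lastCases_castSucc_self] at hab
    refine H (fun E => p (chooseVec g a b E)) (.polynomial hp fun k => .face (g k) (hab k)) ?_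
    rintro E ⟨j, hj, hEj⟩
    rw [← lastCases_castSucc_self E, update_lastCases_last]
    cases E (Fin.last m) with
    | false => exact δ.refl _
    | true =>
      obtain ⟨k, rfl⟩ := Fin.exists_castSucc_eq.2 hj
      exact hδ _ fun h => by simpa [hEj] using congrFun h k

theorem CentralizesAt.sInf {A : Algebra σ} {n : ℕ} {θs : Fin n → Con A} {i : Fin n}
    {S : Set (Con A)} (hS : ∀ δ ∈ S, CentralizesAt θs i δ) : CentralizesAt θs i (Con.sInf S) :=
  fun M hM h δ hδ => hS δ hδ M hM fun E hE => h E hE δ hδ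

theorem centralizesAt_self {A : Algebra σ} {n : ℕ} (θs : Fin n → Con A) (i : Fin n) :
    CentralizesAt θs i (θs i) :=
  fun _ hM _ => hM.rel_update i ⊤

theorem centralizesAt_fin_one_iff {A : Algebra σ} {θs : Fin 1 → Con A} {δ : Con A} :
    CentralizesAt θs 0 δ ↔ θs 0 ≤ δ := by
  constructor
  · intro H a b hab
    simpa using H _ (.face 0 hab) fun E ⟨j, hj, _⟩ => absurd (Subsingleton.elim j 0) hj
  · intro h M hM _
    exact h _ _ (hM.rel_update 0 ⊤)

theorem isLeast_commList {A : Algebra σ} {m : ℕ} (θs : Fin (m + 1) → Con A) :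
    IsLeast {δ | CentralizesAt θs (Fin.last m) δ} (commList θs) := by
  cases m with
  | zero => exact ⟨centralizesAt_self θs 0, fun δ hδ => centralizesAt_fin_one_iff.1 hδ⟩
  | succ n =>
    have commList_eq : commList θs = Con.sInf {δ | CentralizesAt θs (Fin.last (n + 1)) δ} := by
      simp only [← centralizes_iff_centralizesAt]
      rfl
    rw [commList_eq]
    exact ⟨.sInf fun _ hδ => hδ, fun δ hδ a b hab => hab δ hδ⟩

theorem commList_le_last {A : Algebra σ} {m : ℕ} (θs : Fin (m + 1) → Con A) :
    commList θs ≤ θs (Fin.last m) :=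
  (isLeast_commList θs).2 (centralizesAt_self θs _)

/-- A polynomial `d` that is a Mal'cev operation modulo `φ` on `θ`-related pairs: the weak `f`-term
condition at a single congruence `θ`, with `φ = f(θ)`. -/
structure IsMalcevModulo {A : Algebra σ} (d : (Fin 3 → A.carrier) → A.carrier) (θ φ : Con A) :
    Prop where
  isPolynomial : IsPolynomial A d
  left {a b : A.carrier} : θ.r a b → φ.r (d ![a, b, b]) a
  right {a b : A.carrier} : θ.r a b → φ.r (d ![b, b, a]) a

theorem IsWeakFTerm.isMalcevModulo {A : Algebra σ} {F : Con A → Con A} {p : Term σ (Fin 3)}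
    (hF : IsWeakFTerm A F p) (θ : Con A) : IsMalcevModulo (fun v => p.eval A v) θ (F θ) where
  isPolynomial := p.isPolynomial_eval A
  left h := (hF θ _ _ h).1
  right h := (F θ).symm (hF θ _ _ h).2

section Malcev

variable {A : Algebra σ} {d : (Fin 3 → A.carrier) → A.carrier} {θ φ c : Con A} {u v e : A.carrier}

theorem IsMalcevModulo.rel_third (hd : IsMalcevModulo d θ φ) (hφc : φ ≤ c) (hve : θ.r v e)
    (huv : c.r u v) : c.r (d ![u, v, e]) e := by
  have hvv : c.r (d ![u, v, e]) (d ![v, v, e]) :=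
    hd.isPolynomial.rel c (by simp [Fin.forall_fin_succ, huv, c.refl])
  exact c.trans hvv (hφc _ _ (hd.right (θ.symm hve)))

theorem IsMalcevModulo.rel_first (hd : IsMalcevModulo d θ φ) (hφc : φ ≤ c) (hue : θ.r u e)
    (hve : c.r v e) : c.r (d ![u, v, e]) u := by
  have hee : c.r (d ![u, v, e]) (d ![u, e, e]) :=
    hd.isPolynomial.rel c (by simp [Fin.forall_fin_succ, hve, c.refl])
  exact c.trans hee (hφc _ _ (hd.left hue))

/-- The matrix whose entry at `E` is `d` applied to the entries of `M` at `E` and at its projection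
to the lower face in direction `i`, and to the base point `e`. -/
def faceDifference {n : ℕ} (d : (Fin 3 → A.carrier) → A.carrier) (e : A.carrier) (i : Fin n)
    (M : (Fin n → Bool) → A.carrier) : (Fin n → Bool) → A.carrier :=
  fun E => d ![M E, M (Function.update E i false), e]

variable {n : ℕ} {θs : Fin n → Con A} {M : (Fin n → Bool) → A.carrier} {i : Fin n}

theorem isMatrix_faceDifference (hM : IsMatrix θs M) (hd : IsPolynomial A d) (e : A.carrier)
    (i : Fin n) : IsMatrix θs (faceDifference d e i M) := by
  let columns : Fin 3 → (Fin n → Bool) → A.carrier :=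
    ![M, fun E => M (Function.update E i false), fun _ => e]
  have hcolumns : ∀ k, IsMatrix θs (columns k) :=
    Fin.forall_fin_succ.2 ⟨hM, Fin.forall_fin_two.2 ⟨hM.update_false i, .const e⟩⟩
  have faceDifference_eq : faceDifference d e i M = fun E => d fun k => columns k E := by
    refine funext fun E => congrArg d (funext fun k => ?_)
    fin_cases k <;> rfl
  rw [faceDifference_eq]
  exact .polynomial hd hcolumns

theorem faceDifference_rel_of_eq_false (hd : IsMalcevModulo d θ φ) {E : Fin n → Bool}
    (hE : θ.r (M E) e) (hi : E i = false) : φ.r (faceDifference d e i M E) e := by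
  have update_eq : Function.update E i false = E := Function.update_eq_self_iff.2 hi.symm
  rw [faceDifference, update_eq]
  exact hd.right (θ.symm hE)

theorem update_false_ne_top (i : Fin n) (E : Fin n → Bool) : Function.update E i false ≠ ⊤ :=
  fun h => by simpa using congrFun h i

theorem exists_isMatrix_rel_on_faces (hd : IsMalcevModulo d θ φ) (hφθ : φ ≤ θ) (hφc : φ ≤ c)
    (hM : IsMatrix θs M) (hMθ : ∀ E, θ.r (M E) e) (hMc : ∀ E ≠ ⊤, c.r (M E) e)
    (S : Finset (Fin n)) :
    ∃ L, IsMatrix θs L ∧ (∀ E, θ.r (L E) e) ∧ (∀ E ≠ ⊤, c.r (L E) e) ∧ c.r (L ⊤) (M ⊤) ∧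
      ∀ E, ∀ j ∈ S, E j = false → φ.r (L E) e := by
  induction S using Finset.induction_on with
  | empty => exact ⟨M, hM, hMθ, hMc, c.refl _, by simp⟩
  | insert i S _ ih =>
    obtain ⟨L, hL, hLθ, hLc, hLtop, hLφ⟩ := ih
    refine ⟨faceDifference d e i L, isMatrix_faceDifference hL hd.isPolynomial e i,
      fun E => hd.rel_third hφθ (hLθ _) (θ.trans (hLθ _) (θ.symm (hLθ _))),
      fun E hE => hd.rel_third hφc (hLθ _)
        (c.trans (hLc E hE) (c.symm (hLc _ (update_false_ne_top i E)))),
      c.trans (hd.rel_first hφc (hLθ _) (hLc _ (update_false_ne_top i ⊤))) hLtop,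
      fun E j hj hEj => ?_⟩
    obtain rfl | hji := eq_or_ne j i
    · exact faceDifference_rel_of_eq_false hd (hLθ E) hEj
    · have hjS : j ∈ S := Finset.mem_of_mem_insert_of_ne hj hji
      have hlower : φ.r (L (Function.update E i false)) e :=
        hLφ _ j hjS (by rwa [Function.update_of_ne hji])
      exact hd.rel_third le_rfl (hLθ _) (φ.trans (hLφ E j hjS hEj) (φ.symm hlower))

theorem exists_isMatrix_rel_of_ne_top (hd : IsMalcevModulo d θ φ) (hφθ : φ ≤ θ) (hφc : φ ≤ c)
    (hM : IsMatrix θs M) (hMθ : ∀ E, θ.r (M E) e) (hMc : ∀ E ≠ ⊤, c.r (M E) e) :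
    ∃ L, IsMatrix θs L ∧ (∀ E ≠ ⊤, φ.r (L E) e) ∧ c.r (L ⊤) (M ⊤) := by
  obtain ⟨L, hL, -, -, hLtop, hLφ⟩ :=
    exists_isMatrix_rel_on_faces hd hφθ hφc hM hMθ hMc Finset.univ
  refine ⟨L, hL, fun E hE => ?_, hLtop⟩
  obtain ⟨j, hj⟩ := Function.ne_iff.1 hE
  exact hLφ E j (Finset.mem_univ j) (by simpa using hj)

theorem CentralizesAt.mono {δ γ : Con A} (hδ : CentralizesAt θs i δ) (hd : IsMalcevModulo d θ φ)
    (hφθ : φ ≤ θ) (hθs : ∀ j, θs j ≤ θ) (hφδ : φ ≤ δ) (hδγ : δ ≤ γ) : CentralizesAt θs i γ := by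
  intro M hM hMγ
  have hφγ : φ ≤ γ := hφδ.trans hδγ
  let e := M (Function.update ⊤ i false)
  have hMθ (E) : θ.r (M E) e := hM.rel hθs _ _
  let K := faceDifference d e i M
  have hK : IsMatrix θs K := isMatrix_faceDifference hM hd.isPolynomial e i
  have hKθ (E) : θ.r (K E) e := hd.rel_third hφθ (hMθ _) (hM.rel hθs _ _)
  have hKγ : ∀ E ≠ ⊤, γ.r (K E) e := by
    intro E hE
    by_cases hi : E i = false
    · exact hφγ _ _ (faceDifference_rel_of_eq_false hd (hMθ E) hi)
    · obtain ⟨j, hj⟩ := Function.ne_iff.1 hE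
      have hEj : E j = false := by simpa using hj
      exact hd.rel_third hφγ (hMθ _) (γ.symm (hMγ E ⟨j, fun hji => hi (hji ▸ hEj), hEj⟩))
  have hKtop : γ.r (K ⊤) (M ⊤) := hd.rel_first hφγ (hMθ ⊤) (γ.refl e)
  obtain ⟨L, hL, hLφ, hLtop⟩ := exists_isMatrix_rel_of_ne_top hd hφθ hφγ hK hKθ hKγ
  have hLδ : ∀ E ≠ ⊤, δ.r (L E) e := fun E hE => hφδ _ _ (hLφ E hE)
  have lower_rel : δ.r (L (Function.update ⊤ i false)) e := hLδ _ (update_false_ne_top i ⊤)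
  have edge_rel : δ.r (L (Function.update ⊤ i false)) (L ⊤) := by
    refine hδ L hL fun E ⟨j, _, hEj⟩ => δ.trans (hLδ _ (update_false_ne_top i E)) (δ.symm ?_)
    exact hLδ E fun hE => by simp [hE] at hEj
  exact γ.trans (hδγ _ _ (δ.trans (δ.symm lower_rel) edge_rel)) (γ.trans hLtop hKtop)

theorem centralizesAt_last_iff_commList_le {m : ℕ} {θs : Fin (m + 1) → Con A}
    (hd : IsMalcevModulo d θ φ) (hφ : φ ≤ commList θs) (hθs : ∀ i, θs i ≤ θ) (γ : Con A) :
    CentralizesAt θs (Fin.last m) γ ↔ commList θs ≤ γ :=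
  have hφθ : φ ≤ θ := hφ.trans ((commList_le_last θs).trans (hθs _))
  ⟨fun h => (isLeast_commList θs).2 h,
    (isLeast_commList θs).1.mono hd hφθ hθs hφ⟩

end Malcev

theorem centralizesAt_comap_iff {A B : Algebra σ} {f : A.carrier → B.carrier} (hf : IsHom A B f)
    (hsurj : Function.Surjective f) {n : ℕ} {ψs : Fin n → Con B} {i : Fin n} {δ : Con B} :
    CentralizesAt (fun j => (ψs j).comap hf) i (δ.comap hf) ↔ CentralizesAt ψs i δ := by
  constructor
  · intro H M hM h
    obtain ⟨L, hL, rfl⟩ := hM.exists_lift hf hsurj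
    exact H L hL h
  · intro H M hM h
    exact H _ (hM.map hf) h

section Quotient

variable {A : Algebra σ} (η : Con A)

theorem isHom_quotientMk : IsHom A (quotAlg A η) (Quotient.mk η.toSetoid) := fun o x =>
  Quotient.sound (η.compat o _ _ fun i => η.symm (Quotient.mk_out (s := η.toSetoid) (x i)))

variable {η}

theorem Con.le_comap_quotientMk (δ : Con (quotAlg A η)) : η ≤ δ.comap (isHom_quotientMk η) := by
  intro a b hab
  have hmk : Quotient.mk η.toSetoid a = Quotient.mk η.toSetoid b := Quotient.sound hab
  change δ.r (Quotient.mk _ a) (Quotient.mk _ b)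
  exact hmk ▸ δ.refl _

theorem Con.comap_quot {c : Con A} (h : η ≤ c) : (c.quot η h).comap (isHom_quotientMk η) = c :=
  rfl

theorem Con.quot_le_iff {c : Con A} (h : η ≤ c) (δ : Con (quotAlg A η)) :
    c.quot η h ≤ δ ↔ c ≤ δ.comap (isHom_quotientMk η) :=
  ⟨fun H a b => H (Quotient.mk _ a) (Quotient.mk _ b),
    fun H x y => Quotient.inductionOn₂ x y H⟩

theorem Con.isLeast_quot_sup (c : Con A) :
    IsLeast {δ | c ≤ δ.comap (isHom_quotientMk η)} ((Con.sup c η).quot η Con.le_sup_right) :=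
  ⟨fun _ _ => Con.le_sup_left _ _,
    fun δ hδ => (Con.quot_le_iff _ δ).2 (Con.sup_le hδ (Con.le_comap_quotientMk δ))⟩

theorem commList_quot {m : ℕ} {θs : Fin (m + 1) → Con A} (hη : ∀ i, η ≤ θs i)
    (hθs : ∀ γ, CentralizesAt θs (Fin.last m) γ ↔ commList θs ≤ γ) :
    commList (fun i => (θs i).quot η (hη i)) =
      (Con.sup (commList θs) η).quot η Con.le_sup_right := by
  refine (isLeast_commList _).unique ?_
  have centralizes_quot (δ : Con (quotAlg A η)) :
      CentralizesAt (fun i => (θs i).quot η (hη i)) (Fin.last m) δ ↔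
        commList θs ≤ δ.comap (isHom_quotientMk η) := by
    rw [← hθs, ← centralizesAt_comap_iff (isHom_quotientMk η) Quotient.mk_surjective]
    simp only [Con.comap_quot]
  simpa only [centralizes_quot] using Con.isLeast_quot_sup (commList θs)

end Quotient

theorem weak_f_term_commutator_properties_general {A : Algebra σ}
    {d : (Fin 3 → A.carrier) → A.carrier} {θ φ : Con A} (hd : IsMalcevModulo d θ φ)
    {m : ℕ} {θs : Fin (m + 1) → Con A} (hφ : φ ≤ commList θs) (hθs : ∀ i, θs i ≤ θ) :
    (∀ γ : Con A,
      Centralizes (fun j : Fin m => θs j.castSucc) (θs (Fin.last m)) γ ↔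
        commList θs ≤ γ) ∧
    (∀ (η : Con A) (hη : ∀ i, η ≤ θs i),
      commList (fun i => (θs i).quot η (hη i)) =
        (Con.sup (commList θs) η).quot η Con.le_sup_right) := by
  have centralizesAt_iff := centralizesAt_last_iff_commList_le hd hφ hθs
  exact ⟨fun γ => (centralizes_iff_centralizesAt θs γ).trans (centralizesAt_iff γ),
    fun _ hη => commList_quot hη centralizesAt_iff⟩

/-- Theorem 5.8 of "On Supernilpotent Algebras": in a variety with a weak
`f`-term, if `f(θ) ≤ [θ₁,…,θₙ] ≤ θ₁∨⋯∨θₙ ≤ θ`, then (1) `C(θ₁,…,θₙ;γ)` holds iff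
`[θ₁,…,θₙ] ≤ γ`, and (2) the commutator behaves well with respect to quotients. -/
theorem weak_f_term_commutator_properties {σ : Signature} (V : Algebra σ → Prop)
    (hV : IsVariety V) (p : Term σ (Fin 3)) (hp : HasWeakFTermVariety V p)
    (A : Algebra σ) (hA : V A)
    (F : Con A → Con A) (hFmono : MonotoneCon F) (hF : IsWeakFTerm A F p)
    {m : ℕ} (θ : Con A) (θs : Fin (m + 1) → Con A)
    (hlow : F θ ≤ commList θs)
    (hmid : commList θs ≤ Con.iSup (fun i => θs i))
    (hhigh : Con.iSup (fun i => θs i) ≤ θ) :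
    (∀ γ : Con A,
      Centralizes (fun j : Fin m => θs j.castSucc) (θs (Fin.last m)) γ ↔
        commList θs ≤ γ) ∧
    (∀ (η : Con A) (hη : ∀ i, η ≤ θs i),
      commList (fun i => (θs i).quot η (hη i)) =
        (Con.sup (commList θs) η).quot η Con.le_sup_right) := by
  exact weak_f_term_commutator_properties_general (hF.isMalcevModulo θ) hlow
    fun i => (Con.le_iSup θs i).trans hhigh

end UA
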